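/- Let 𝕜 be a field, V, V', W, W' vector spaces over 𝕜, and d : V → V', δ : W → W' linear maps. Then the space of degenerate cocycles equals the tensor product of the two kernels: ker(d ⊗ 1_W) ⊓ ker(1_V ⊗ δ) = range(TensorProduct.map ι_d ι_δ), where ι_d : ker(d) ↪ V and ι_δ : ker(δ) ↪ W are the subspace inclusions and TensorProduct.map ι_d ι_δ : ker(d) ⊗ ker(δ) → V ⊗ W. -/

import Mathlib

open TensorProduct

/-! By flatness `ker (d ⊗ 1_W)` is the image of `ker d ⊗ W`. Since `ker d ⊗ W' → V ⊗ W'` is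
injective, `1_V ⊗ δ` vanishes on the image of `x ∈ ker d ⊗ W` exactly when `1_{ker d} ⊗ δ`
vanishes on `x`, which by flatness again means that `x` comes from `ker d ⊗ ker δ`. -/

theorem map_rTensor_ker_lTensor {R U V W W' : Type*} [CommSemiring R]
    [AddCommMonoid U] [Module R U] [AddCommMonoid V] [Module R V]
    [AddCommMonoid W] [Module R W] [AddCommMonoid W'] [Module R W'] [Module.Flat R W']
    {f : U →ₗ[R] V} (hf : Function.Injective f) (δ : W →ₗ[R] W') :
    (LinearMap.ker (δ.lTensor U)).map (f.rTensor W)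
      = LinearMap.range (f.rTensor W) ⊓ LinearMap.ker (δ.lTensor V) := by
  have ker_rTensor_eq_bot : LinearMap.ker (f.rTensor W') = ⊥ :=
    LinearMap.ker_eq_bot_of_injective (Module.Flat.rTensor_preserves_injective_linearMap f hf)
  have ker_eq_comap :
      LinearMap.ker (δ.lTensor U) = (LinearMap.ker (δ.lTensor V)).comap (f.rTensor W) := by
    rw [← LinearMap.ker_comp, LinearMap.lTensor_comp_rTensor, ← LinearMap.rTensor_comp_lTensor,
      LinearMap.ker_comp_of_ker_eq_bot _ ker_rTensor_eq_bot]
  rw [ker_eq_comap, Submodule.map_comap_eq]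

theorem ker_inf_ker_eq_range_map_ker_general {R V V' W W' : Type*} [CommRing R]
    [AddCommGroup V] [Module R V] [AddCommGroup V'] [Module R V']
    [AddCommGroup W] [Module R W] [Module.Flat R W]
    [AddCommGroup W'] [Module R W'] [Module.Flat R W']
    (d : V →ₗ[R] V') [Module.Flat R (LinearMap.ker d)] (δ : W →ₗ[R] W') :
    LinearMap.ker (LinearMap.rTensor W d) ⊓ LinearMap.ker (LinearMap.lTensor V δ)
      = LinearMap.range
          (TensorProduct.map (LinearMap.ker d).subtype (LinearMap.ker δ).subtype) := by
  let ι := (LinearMap.ker d).subtype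
  let κ := (LinearMap.ker δ).subtype
  calc LinearMap.ker (d.rTensor W) ⊓ LinearMap.ker (δ.lTensor V)
    _ = LinearMap.range (ι.rTensor W) ⊓ LinearMap.ker (δ.lTensor V) := by
      rw [(Module.Flat.rTensor_exact W d.exact_subtype_ker_map).linearMap_ker_eq]
    _ = (LinearMap.ker (δ.lTensor (LinearMap.ker d))).map (ι.rTensor W) :=
      (map_rTensor_ker_lTensor (LinearMap.ker d).injective_subtype δ).symm
    _ = (LinearMap.range (κ.lTensor (LinearMap.ker d))).map (ι.rTensor W) := by
      rw [(Module.Flat.lTensor_exact _ δ.exact_subtype_ker_map).linearMap_ker_eq]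
    _ = LinearMap.range (TensorProduct.map ι κ) := by
      rw [← LinearMap.range_comp, LinearMap.rTensor_comp_lTensor]

/-- Degenerate cocycles: `ker(d ⊗ 1_W) ⊓ ker(1_V ⊗ δ) = im(ker d ⊗ ker δ → V ⊗ W)`. -/
theorem ker_inf_ker_eq_range_map_ker
    {𝕜 : Type} [Field 𝕜]
    {V V' W W' : Type} [AddCommGroup V] [Module 𝕜 V]
    [AddCommGroup V'] [Module 𝕜 V'] [AddCommGroup W] [Module 𝕜 W]
    [AddCommGroup W'] [Module 𝕜 W']
    (d : V →ₗ[𝕜] V') (δ : W →ₗ[𝕜] W') :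
    LinearMap.ker (LinearMap.rTensor W d) ⊓ LinearMap.ker (LinearMap.lTensor V δ)
      = LinearMap.range
          (TensorProduct.map (LinearMap.ker d).subtype (LinearMap.ker δ).subtype) :=
  ker_inf_ker_eq_range_map_ker_general d δ
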